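/- arXiv:2203.01533 — 5 statements merged into one kernel-verified Lean document; each statement's English description precedes it below -/
import Mathlib

section
/- Let X be a finite set and let Δ ⊆ 2^X be a downward-closed family of subsets of X containing the empty set. Let U ∈ Δ, let x ∈ X \ U be such that U ∪ {x} ∈ Δ, and let y, z ∈ X \ U be distinct elements such that U ∪ {y, z} ∈ Δ. Suppose the local matrix A^U of (Δ, U) has at most one positive eigenvalue, counted with multiplicity. Then U ∪ {x, y} ∈ Δ or U ∪ {x, z} ∈ Δ. -/
open Matrix

/-- The local matrix `A^U` of a downward-closed family `Δ` at `U`, with rows and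
columns indexed by `X ∪ {*}` (modeled as `Option X`, with `none` playing the role
of the extra symbol `*`). -/
noncomputable def localMatrix {α : Type*} [DecidableEq α]
    (Δ : Finset (Finset α)) (U : Finset α) : Matrix (Option α) (Option α) ℝ :=
  fun i j =>
    match i, j with
    | some x, some y =>
        if x ≠ y ∧ x ∉ U ∧ y ∉ U ∧ insert x (insert y U) ∈ Δ then 1 else 0
    | some x, none => if x ∉ U ∧ insert x U ∈ Δ then 1 else 0
    | none, some y => if y ∉ U ∧ insert y U ∈ Δ then 1 else 0
    | none, none => 1

/-- The matrix `M` has at most one positive eigenvalue, counted with multiplicity. -/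
def AtMostOnePosEigenvalue {m : Type*} [Fintype m] [DecidableEq m]
    (M : Matrix m m ℝ) : Prop :=
  ∃ hM : M.IsHermitian,
    (Finset.univ.filter fun i => 0 < hM.eigenvalues i).card ≤ 1

lemma form_eq {m : Type*} [Fintype m] [DecidableEq m] (M : Matrix m m ℝ) (hM : M.IsHermitian) :
    ∃ P : Matrix m m ℝ, ∀ w : m → ℝ,
      w ⬝ᵥ (M *ᵥ w) = ∑ i, hM.eigenvalues i * ((P *ᵥ w) i) ^ 2 := by
  refine ⟨(hM.eigenvectorUnitary : Matrix m m ℝ)ᵀ, fun w => ?_⟩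
  have h := hM.spectral_theorem
  have h2 : M = (hM.eigenvectorUnitary : Matrix m m ℝ) * diagonal hM.eigenvalues *
      (hM.eigenvectorUnitary : Matrix m m ℝ)ᵀ := by
    conv_lhs => rw [h]
    rw [Unitary.conjStarAlgAut_apply]
    rfl
  generalize (hM.eigenvectorUnitary : Matrix m m ℝ) = P at h2
  generalize hM.eigenvalues = l at h2
  subst h2
  rw [← mulVec_mulVec, ← mulVec_mulVec, dotProduct_mulVec, ← mulVec_transpose]
  simp only [dotProduct, mulVec_diagonal]
  exact Finset.sum_congr rfl fun i _ => by ring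

lemma no_two {m : Type*} [Fintype m] [DecidableEq m] (M : Matrix m m ℝ)
    (h : AtMostOnePosEigenvalue M) (u v : m → ℝ) (hu : 0 < u ⬝ᵥ (M *ᵥ u))
    (hw : ∀ s t : ℝ, (s • u + t • v) ⬝ᵥ (M *ᵥ (s • u + t • v)) ≤ 0 → s = 0 ∧ t = 0) :
    False := by
  obtain ⟨hM, hc⟩ := h
  obtain ⟨P, hP⟩ := form_eq M hM
  rw [Finset.card_le_one] at hc
  have key : ∃ i0, ∀ w : m → ℝ, (P *ᵥ w) i0 = 0 → w ⬝ᵥ (M *ᵥ w) ≤ 0 := by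
    by_cases hex : ∃ i, 0 < hM.eigenvalues i
    · obtain ⟨i0, hi0⟩ := hex
      refine ⟨i0, fun w hw0 => ?_⟩
      rw [hP]
      refine Finset.sum_nonpos fun i _ => ?_
      by_cases hi : 0 < hM.eigenvalues i
      · have := hc i (by simpa using hi) i0 (by simpa using hi0)
        subst this
        simp [hw0]
      · exact mul_nonpos_of_nonpos_of_nonneg (not_lt.1 hi) (sq_nonneg _)
    · exfalso
      push Not at hex
      have : u ⬝ᵥ (M *ᵥ u) ≤ 0 := by
        rw [hP]
        exact Finset.sum_nonpos fun i _ =>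
          mul_nonpos_of_nonpos_of_nonneg (hex i) (sq_nonneg _)
      linarith
  obtain ⟨i0, hi0⟩ := key
  have h1 := hw ((P *ᵥ v) i0) (-(P *ᵥ u) i0) (hi0 _ (by
    simp only [mulVec_add, mulVec_smul, Pi.add_apply, Pi.smul_apply, smul_eq_mul]; ring))
  have := hi0 u (by linarith [h1.2])
  linarith

theorem stmt_6 {α : Type*} [Fintype α] [DecidableEq α]
    (Δ : Finset (Finset α))
    (hdown : ∀ S T : Finset α, S ⊆ T → T ∈ Δ → S ∈ Δ)
    (hempty : ∅ ∈ Δ)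
    (U : Finset α) (hU : U ∈ Δ)
    (x : α) (hx : x ∉ U) (hxU : insert x U ∈ Δ)
    (y z : α) (hy : y ∉ U) (hz : z ∉ U) (hyz : y ≠ z)
    (hyzU : insert y (insert z U) ∈ Δ)
    (hEig : AtMostOnePosEigenvalue (localMatrix Δ U)) :
    insert x (insert y U) ∈ Δ ∨ insert x (insert z U) ∈ Δ := by
  by_cases hxy : x = y
  · subst hxy; exact Or.inr hyzU
  by_cases hxz : x = z
  · subst hxz; left; rwa [Finset.insert_comm]
  by_contra hcon
  push Not at hcon
  obtain ⟨h1, h2⟩ := hcon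
  have hyU : insert y U ∈ Δ := hdown _ _ (by grind) hyzU
  have hzU : insert z U ∈ Δ := hdown _ _ (by grind) hyzU
  have hzyU : insert z (insert y U) ∈ Δ := by rwa [Finset.insert_comm]
  have h1' : insert y (insert x U) ∉ Δ := by rwa [Finset.insert_comm]
  have h2' : insert z (insert x U) ∉ Δ := by rwa [Finset.insert_comm]
  have hform : ∀ s t : ℝ,
      (s • (Pi.single (some y) 1 + Pi.single (some z) 1 : Option α → ℝ) +
        t • (Pi.single none 1 + Pi.single (some x) 1 - Pi.single (some y) 1
          - Pi.single (some z) 1 : Option α → ℝ)) ⬝ᵥ (localMatrix Δ U *ᵥ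
      (s • (Pi.single (some y) 1 + Pi.single (some z) 1 : Option α → ℝ) +
        t • (Pi.single none 1 + Pi.single (some x) 1 - Pi.single (some y) 1
          - Pi.single (some z) 1 : Option α → ℝ))) = 2 * s ^ 2 + t ^ 2 := by
    intro s t
    simp only [mulVec_add, mulVec_sub, mulVec_smul, add_dotProduct, sub_dotProduct,
      smul_dotProduct, single_dotProduct, mulVec_single_one, Pi.add_apply, Pi.sub_apply,
      Pi.smul_apply, col_apply, smul_eq_mul, one_mul]
    simp [localMatrix, hx, hy, hz, hxU, hyU, hzU, h1, h2, h1', h2', hyzU, hzyU, hyz, hyz.symm]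
    ring
  refine no_two _ hEig ?u ?v ?_ ?_
  · exact (Pi.single (some y) 1 + Pi.single (some z) 1 : Option α → ℝ)
  · exact (Pi.single none 1 + Pi.single (some x) 1 - Pi.single (some y) 1
          - Pi.single (some z) 1 : Option α → ℝ)
  · have := hform 1 0
    simp only [one_smul, zero_smul, add_zero] at this
    rw [this]; norm_num
  · intro s t hst
    rw [hform] at hst
    constructor <;> apply pow_eq_zero_iff (two_ne_zero) |>.1 <;> linarith [sq_nonneg s, sq_nonneg t]
end

section
/- Let X be a finite set and let Δ ⊆ 2^X be a downward-closed family of subsets of X containing the empty set. Suppose that for every U ∈ Δ the local matrix A^U of (Δ, U) has at most one positive eigenvalue, counted with multiplicity. Then Δ satisfies the matroid exchange property: for all S, T ∈ Δ with |S| < |T| there exists y ∈ T \ S such that S ∪ {y} ∈ Δ (i.e. Δ is the family of independent sets of a matroid). -/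
open Matrix

theorem aux_quad {m : Type*} [Fintype m] [DecidableEq m] (M : Matrix m m ℝ)
    (hM : M.IsHermitian) (x : m → ℝ)
    (hx : ∀ i, 0 < hM.eigenvalues i → (hM.eigenvectorBasis i).ofLp ⬝ᵥ x = 0) :
    x ⬝ᵥ (M *ᵥ x) ≤ 0 := by
  have key := hM.eigenvectorBasis.sum_inner_mul_inner (WithLp.toLp 2 x) (WithLp.toLp 2 (M *ᵥ x))
  have e0 : inner ℝ (WithLp.toLp 2 x) (WithLp.toLp 2 (M *ᵥ x)) = x ⬝ᵥ (M *ᵥ x) := by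
    simp [EuclideanSpace.inner_eq_star_dotProduct, dotProduct_comm]
  rw [e0] at key
  rw [← key]
  apply Finset.sum_nonpos
  intro i _
  have e1 : inner ℝ (WithLp.toLp 2 x) (hM.eigenvectorBasis i) =
      (hM.eigenvectorBasis i).ofLp ⬝ᵥ x := by
    simp [EuclideanSpace.inner_eq_star_dotProduct]
  have e2 : inner ℝ (hM.eigenvectorBasis i) (WithLp.toLp 2 (M *ᵥ x)) =
      hM.eigenvalues i * ((hM.eigenvectorBasis i).ofLp ⬝ᵥ x) := by
    have h1 : inner ℝ (hM.eigenvectorBasis i) (WithLp.toLp 2 (M *ᵥ x)) =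
      (hM.eigenvectorBasis i).ofLp ⬝ᵥ (M *ᵥ x) := by
      simp [EuclideanSpace.inner_eq_star_dotProduct, dotProduct_comm]
    have hT : Mᵀ = M := by
      have := hM.eq
      rwa [conjTranspose_eq_transpose_of_trivial] at this
    rw [h1, dotProduct_mulVec, ← mulVec_transpose, hT, hM.mulVec_eigenvectorBasis]
    simp
  rw [e1, e2]
  by_cases h : 0 < hM.eigenvalues i
  · rw [hx i h]; simp
  · have := sq_nonneg ((hM.eigenvectorBasis i).ofLp ⬝ᵥ x)
    nlinarith

theorem aux_two {m : Type*} [Fintype m] [DecidableEq m] (M : Matrix m m ℝ)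
    (hM : AtMostOnePosEigenvalue M) (u w : m → ℝ)
    (huu : u ⬝ᵥ (M *ᵥ u) = 1) (huw : u ⬝ᵥ (M *ᵥ w) = 0) (hwu : w ⬝ᵥ (M *ᵥ u) = 0)
    (hww : w ⬝ᵥ (M *ᵥ w) = 1) : False := by
  obtain ⟨hM, hc⟩ := hM
  have hex : ∃ a b : ℝ, 0 < a ^ 2 + b ^ 2 ∧ ∀ i, 0 < hM.eigenvalues i →
      (hM.eigenvectorBasis i).ofLp ⬝ᵥ (a • u + b • w) = 0 := by
    rw [Finset.card_le_one] at hc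
    by_cases h : ∃ i, 0 < hM.eigenvalues i
    · obtain ⟨i, hi⟩ := h
      have huniq : ∀ j, 0 < hM.eigenvalues j → j = i := fun j hj =>
        hc j (by simpa using hj) i (by simpa using hi)
      by_cases h0 : (hM.eigenvectorBasis i).ofLp ⬝ᵥ u = 0
      · refine ⟨1, 0, by norm_num, fun j hj => ?_⟩
        rw [huniq j hj]; simp [h0]
      · refine ⟨(hM.eigenvectorBasis i).ofLp ⬝ᵥ w, -((hM.eigenvectorBasis i).ofLp ⬝ᵥ u),
          add_pos_of_nonneg_of_pos (sq_nonneg _) (sq_pos_of_ne_zero (neg_ne_zero.mpr h0)), fun j hj => ?_⟩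
        rw [huniq j hj, dotProduct_add, dotProduct_smul, dotProduct_smul]
        simp only [smul_eq_mul]; ring
    · exact ⟨1, 0, by norm_num, fun j hj => (h ⟨j, hj⟩).elim⟩
  obtain ⟨a, b, hab, h⟩ := hex
  have := aux_quad M hM _ h
  simp only [mulVec_add, mulVec_smul, dotProduct_add, add_dotProduct, dotProduct_smul,
    smul_dotProduct, huu, huw, hwu, hww, smul_eq_mul] at this
  nlinarith

theorem aux_local {α : Type*} [Fintype α] [DecidableEq α]
    (Δ : Finset (Finset α))
    (hdown : ∀ S T : Finset α, S ⊆ T → T ∈ Δ → S ∈ Δ)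
    (U : Finset α) (hE : AtMostOnePosEigenvalue (localMatrix Δ U))
    (x y z : α) (hx : x ∉ U) (hy : y ∉ U) (hz : z ∉ U) (hxy : x ≠ y) (hyz : y ≠ z)
    (hxz : x ≠ z) (h1 : insert y U ∈ Δ) (h2 : insert x (insert z U) ∈ Δ) :
    insert x (insert y U) ∈ Δ ∨ insert z (insert y U) ∈ Δ := by
  by_contra hcon
  push Not at hcon
  obtain ⟨n1, n2⟩ := hcon
  have n1' : insert y (insert x U) ∉ Δ := by rwa [Finset.insert_comm]
  have n2' : insert y (insert z U) ∉ Δ := by rwa [Finset.insert_comm]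
  have h2' : insert z (insert x U) ∈ Δ := by rwa [Finset.insert_comm]
  have hzU : insert z U ∈ Δ := hdown _ _ (Finset.subset_insert _ _) h2
  have hxU : insert x U ∈ Δ := hdown _ _ (Finset.subset_insert _ _) h2'
  refine aux_two _ hE (Pi.single none 1)
    (Pi.single (some x) 1 - Pi.single (some y) 1 + Pi.single (some z) 1 - Pi.single none 1)
    ?_ ?_ ?_ ?_ <;>
  simp [mulVec_add, mulVec_sub, add_dotProduct, sub_dotProduct, localMatrix, *, hxy.symm,
    hyz.symm, hxz.symm]

theorem aux_ind {α : Type*} [Fintype α] [DecidableEq α]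
    (Δ : Finset (Finset α))
    (hdown : ∀ S T : Finset α, S ⊆ T → T ∈ Δ → S ∈ Δ)
    (hEig : ∀ U ∈ Δ, AtMostOnePosEigenvalue (localMatrix Δ U)) (n : ℕ) :
    ∀ S ∈ Δ, ∀ T ∈ Δ, (S \ T).card = n → S.card < T.card →
      ∃ y ∈ T \ S, insert y S ∈ Δ := by
  induction n with
  | zero =>
    intro S hS T hT h0 hlt
    have hsub : S ⊆ T := by simpa [Finset.sdiff_eq_empty_iff_subset] using h0
    obtain ⟨y, hyT, hyS⟩ := Finset.exists_mem_notMem_of_card_lt_card hlt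
    exact ⟨y, by simp [hyT, hyS], hdown _ T (Finset.insert_subset hyT hsub) hT⟩
  | succ n ih =>
    intro S hS T hT hn hlt
    have hne : (S \ T).Nonempty := by rw [← Finset.card_pos]; omega
    obtain ⟨s, hs⟩ := hne
    have hs0 := hs
    rw [Finset.mem_sdiff] at hs
    obtain ⟨hsS, hsT⟩ := hs
    have hU : S.erase s ∈ Δ := hdown _ S (Finset.erase_subset _ _) hS
    have hcard := Finset.card_erase_of_mem hsS
    have hpos : 0 < S.card := Finset.card_pos.mpr ⟨s, hsS⟩
    have e1 : S.erase s \ T = (S \ T).erase s := by ext a; simp; tauto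
    have c1 : (S.erase s \ T).card = n := by
      rw [e1, Finset.card_erase_of_mem hs0]; omega
    obtain ⟨y, hy, hyΔ⟩ := ih _ hU T hT c1 (by omega)
    rw [Finset.mem_sdiff] at hy
    have hys : y ≠ s := fun h => hsT (h ▸ hy.1)
    have e2 : insert y (S.erase s) \ T = S.erase s \ T := by
      rw [Finset.insert_sdiff_of_mem _ hy.1]
    obtain ⟨z, hz, hzΔ⟩ := ih _ hyΔ T hT (by rw [e2, c1])
      (by rw [Finset.card_insert_of_notMem hy.2]; omega)
    rw [Finset.mem_sdiff, Finset.mem_insert, not_or] at hz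
    have hzs : z ≠ s := fun h => hsT (h ▸ hz.1)
    have hzS : z ∉ S := fun h => hz.2.2 (Finset.mem_erase.mpr ⟨hzs, h⟩)
    have hyS : y ∉ S := fun h => hy.2 (Finset.mem_erase.mpr ⟨hys, h⟩)
    have hins : insert s (S.erase s) = S := Finset.insert_erase hsS
    have := aux_local Δ hdown (S.erase s) (hEig _ hU) z s y hz.2.2 (by simp) hy.2 hzs hys.symm
      hz.2.1 (by rwa [hins]) hzΔ
    rw [hins] at this
    rcases this with h | h
    · exact ⟨z, by simp [hz.1, hzS], h⟩
    · exact ⟨y, by simp [hy.1, hyS], h⟩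

theorem stmt_7 {α : Type*} [Fintype α] [DecidableEq α]
    (Δ : Finset (Finset α))
    (hdown : ∀ S T : Finset α, S ⊆ T → T ∈ Δ → S ∈ Δ)
    (hempty : ∅ ∈ Δ)
    (hEig : ∀ U ∈ Δ, AtMostOnePosEigenvalue (localMatrix Δ U)) :
    ∀ S ∈ Δ, ∀ T ∈ Δ, S.card < T.card →
      ∃ y ∈ T \ S, insert y S ∈ Δ := by
  intro S hS T hT h
  exact aux_ind Δ hdown hEig _ S hS T hT rfl h
end

section
/- Let M be a matroid on a finite ground set X and let S be an independent set of M. Let A be the real symmetric matrix with rows and columns indexed by X ∪ {*} (where * is a new symbol not in X), with entries: for distinct x, y ∈ X, A_{xy} = 1 if x, y ∉ S and S ∪ {x, y} is independent, and A_{xy} = 0 otherwise; A_{xx} = 0 for all x ∈ X; A_{x*} = A_{*x} = 1 if x ∉ S and S ∪ {x} is independent, and 0 otherwise; and A_{**} = 1. Then A has at most one positive eigenvalue, counted with multiplicity. -/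
open Matrix
open scoped Classical

/-- The local matrix of a matroid `M` at an independent set `S`, with rows and
columns indexed by `X ∪ {*}` (modeled as `Option X`, with `none` playing the role
of the extra symbol `*`). -/
noncomputable def matroidLocalMatrix {α : Type*} [DecidableEq α]
    (M : Matroid α) (S : Finset α) : Matrix (Option α) (Option α) ℝ :=
  fun i j =>
    match i, j with
    | some x, some y =>
        if x ≠ y ∧ x ∉ S ∧ y ∉ S ∧ M.Indep ↑(insert x (insert y S)) then 1 else 0
    | some x, none => if x ∉ S ∧ M.Indep ↑(insert x S) then 1 else 0
    | none, some y => if y ∉ S ∧ M.Indep ↑(insert y S) then 1 else 0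
    | none, none => 1

lemma aux_form {m κ : Type*} [Fintype m] [Fintype κ]
    (A : Matrix m m ℝ) (a : m → ℝ) (g : κ → m → ℝ)
    (h : ∀ i j, A i j = a i * a j - ∑ c, g c i * g c j) (z : m → ℝ) :
    z ⬝ᵥ (A *ᵥ z) = (a ⬝ᵥ z) ^ 2 - ∑ c, (g c ⬝ᵥ z) ^ 2 := by
  have hA : A = vecMulVec a a - ∑ c, vecMulVec (g c) (g c) := by
    ext i j
    simp [h, vecMulVec_apply, Matrix.sum_apply]
  have e : ∀ b : m → ℝ, z ⬝ᵥ (vecMulVec b b *ᵥ z) = (b ⬝ᵥ z) ^ 2 := by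
    intro b
    rw [vecMulVec_mulVec]
    simp [dotProduct_smul, dotProduct_comm z b, pow_two]
  rw [hA, sub_mulVec, dotProduct_sub, e, Matrix.sum_mulVec, dotProduct_sum]
  simp_rw [e]

lemma aux_spec {m κ : Type*} [Fintype m] [DecidableEq m] [Fintype κ]
    (A : Matrix m m ℝ) (hA : A.IsHermitian) (a : m → ℝ) (g : κ → m → ℝ)
    (h : ∀ i j, A i j = a i * a j - ∑ c, g c i * g c j) :
    (Finset.univ.filter fun i => 0 < hA.eigenvalues i).card ≤ 1 := by
  rw [Finset.card_le_one]
  intro i hi j hj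
  by_contra hij
  simp only [Finset.mem_filter, Finset.mem_univ, true_and] at hi hj
  have orth : ∀ k l, (hA.eigenvectorBasis k : m → ℝ) ⬝ᵥ (hA.eigenvectorBasis l : m → ℝ)
      = if k = l then 1 else 0 := by
    intro k l
    have := (orthonormal_iff_ite.mp hA.eigenvectorBasis.orthonormal) k l
    rw [← this, EuclideanSpace.inner_eq_star_dotProduct]
    simp [dotProduct_comm]
  have ei := hA.mulVec_eigenvectorBasis i
  have ej := hA.mulVec_eigenvectorBasis j
  have o1 := orth i i
  have o2 := orth i j
  have o3 := orth j i
  have o4 := orth j j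
  simp only [hij, Ne.symm hij, if_true, if_false] at o1 o2 o3 o4
  set u : m → ℝ := (hA.eigenvectorBasis i : m → ℝ) with hu
  set w : m → ℝ := (hA.eigenvectorBasis j : m → ℝ) with hw
  obtain ⟨p, q, hpq, h0⟩ : ∃ p q : ℝ, 0 < p ^ 2 + q ^ 2 ∧ p * (a ⬝ᵥ u) + q * (a ⬝ᵥ w) = 0 := by
    by_cases hc : a ⬝ᵥ u = 0
    · exact ⟨1, 0, by norm_num, by simp [hc]⟩
    · exact ⟨-(a ⬝ᵥ w), a ⬝ᵥ u, by positivity, by ring⟩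
  have f := aux_form A a g h (p • u + q • w)
  have hz : a ⬝ᵥ (p • u + q • w) = 0 := by
    simpa [dotProduct_add, dotProduct_smul] using h0
  rw [hz, mulVec_add, mulVec_smul, mulVec_smul, ei, ej] at f
  simp only [dotProduct_add, add_dotProduct, dotProduct_smul, smul_dotProduct, o1, o2, o3, o4,
    smul_eq_mul] at f
  have : 0 ≤ ∑ c, (p * (g c ⬝ᵥ u) + q * (g c ⬝ᵥ w)) ^ 2 :=
    Finset.sum_nonneg fun _ _ => sq_nonneg _
  have h1 : p ^ 2 * hA.eigenvalues i + q ^ 2 * hA.eigenvalues j ≤ 0 := by nlinarith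
  have h2 : 0 ≤ p ^ 2 * hA.eigenvalues i := by positivity
  have h3 : 0 ≤ q ^ 2 * hA.eigenvalues j := by positivity
  have h4 : p ^ 2 = 0 := by
    have : p ^ 2 * hA.eigenvalues i = 0 := by linarith
    exact (mul_eq_zero.mp this).resolve_right hi.ne'
  have h5 : q ^ 2 = 0 := by
    have : q ^ 2 * hA.eigenvalues j = 0 := by linarith
    exact (mul_eq_zero.mp this).resolve_right hj.ne'
  linarith

lemma aux_mat {α : Type*} [DecidableEq α]
    (M : Matroid α) (hE : M.E = Set.univ)
    (S : Finset α) (hS : M.Indep ↑S) (x y : α) :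
    (x ≠ y ∧ x ∉ S ∧ y ∉ S ∧ M.Indep ↑(insert x (insert y S))) ↔
    ((x ∉ S ∧ M.Indep ↑(insert x S)) ∧ (y ∉ S ∧ M.Indep ↑(insert y S)) ∧
      M.closure (insert x (S : Set α)) ≠ M.closure (insert y (S : Set α))) := by
  have hN : ∀ z, (z ∉ S ∧ M.Indep ↑(insert z S)) ↔ z ∉ M.closure (S : Set α) := by
    intro z
    rw [hS.notMem_closure_iff (by simp [hE])]
    simp [and_comm]
  have mx : ∀ z, z ∈ M.closure (insert z (S : Set α)) := fun z =>
    M.mem_closure_of_mem (Set.mem_insert _ _) (by simp [hE])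
  constructor
  · rintro ⟨hxy, hx, hy, hi⟩
    simp only [Finset.coe_insert] at hi ⊢
    refine ⟨⟨hx, hi.subset (by grind)⟩, ⟨hy, hi.subset (by grind)⟩, fun he => ?_⟩
    have hI : M.Indep (insert y (S : Set α)) := hi.subset (by grind)
    have := (hI.notMem_closure_iff (e := x) (by simp [hE])).2 ⟨hi, by simp [hxy, hx]⟩
    exact this (he ▸ mx x)
  · rintro ⟨hx, hy, hne⟩
    have hx' := (hN x).1 hx
    have hI : M.Indep (insert y (S : Set α)) := by simpa using hy.2
    have hxc : x ∉ M.closure (insert y (S : Set α)) := fun hc =>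
      hne (Matroid.closure_insert_congr ⟨hc, hx'⟩)
    have := (hI.notMem_closure_iff (e := x) (by simp [hE])).1 hxc
    refine ⟨fun e => hne (by rw [e]), hx.1, hy.1, by simpa using this.1⟩

theorem stmt_8 {α : Type*} [Fintype α] [DecidableEq α]
    (M : Matroid α) (hE : M.E = Set.univ)
    (S : Finset α) (hS : M.Indep ↑S) :
    AtMostOnePosEigenvalue (matroidLocalMatrix M S) := by
  have key := aux_mat M hE S hS
  have hform : ∀ i j, matroidLocalMatrix M S i j =
      (fun i : Option α => i.elim (1 : ℝ) fun x => if x ∉ S ∧ M.Indep ↑(insert x S) then 1 else 0) i *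
      (fun i : Option α => i.elim (1 : ℝ) fun x => if x ∉ S ∧ M.Indep ↑(insert x S) then 1 else 0) j
      - ∑ c : Set α,
      (fun (c : Set α) (i : Option α) => i.elim (0 : ℝ) fun x =>
        if (x ∉ S ∧ M.Indep ↑(insert x S)) ∧ M.closure (insert x (S : Set α)) = c then 1 else 0) c i *
      (fun (c : Set α) (i : Option α) => i.elim (0 : ℝ) fun x =>
        if (x ∉ S ∧ M.Indep ↑(insert x S)) ∧ M.closure (insert x (S : Set α)) = c then 1 else 0) c j := by
    intro i j
    rcases i with _ | x <;> rcases j with _ | y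
    · simp [matroidLocalMatrix]
    · simp [matroidLocalMatrix]
    · simp [matroidLocalMatrix]
    · simp only [matroidLocalMatrix, key, Option.elim]
      by_cases hP : (x ∉ S ∧ M.Indep ↑(insert x S)) <;>
        by_cases hQ : (y ∉ S ∧ M.Indep ↑(insert y S)) <;>
        simp only [hP, hQ, true_and, false_and, if_true, if_false, mul_zero, zero_mul, mul_one,
          Finset.sum_const_zero, sub_zero, not_false_eq_true, and_self, ne_eq, and_false]
      by_cases he : M.closure (insert x (S : Set α)) = M.closure (insert y (S : Set α)) <;>
        simp [he, eq_comm]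
  have hH : (matroidLocalMatrix M S).IsHermitian := by
    ext i j
    simp only [conjTranspose_apply, star_trivial]
    rw [hform, hform]
    congr 1
    · ring
    · exact Finset.sum_congr rfl fun c _ => mul_comm _ _
  exact ⟨hH, aux_spec _ hH _ _ hform⟩
end

section
/- Let f ∈ ℝ[w_1, …, w_n] be a Lorentzian polynomial of degree d ≥ 2. Then for every point w = (w_1, …, w_n) ∈ ℝ^n with all coordinates strictly positive, the Hessian matrix H_f(w) satisfies (Hyp). -/
open Matrix MvPolynomial

/-- A real symmetric `r × r` matrix `M` satisfies (Hyp) if for all `v, w ∈ ℝ^r` with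
`⟨w, M w⟩ > 0` one has `⟨v, M w⟩² ≥ ⟨v, M v⟩ · ⟨w, M w⟩`. -/
def SatisfiesHyp {n : ℕ} (M : Matrix (Fin n) (Fin n) ℝ) : Prop :=
  ∀ v w : Fin n → ℝ, 0 < w ⬝ᵥ M.mulVec w →
    (v ⬝ᵥ M.mulVec w) ^ 2 ≥ (v ⬝ᵥ M.mulVec v) * (w ⬝ᵥ M.mulVec w)

/-- The iterated partial derivative `∂^m f = ∂_1^{m_1} ⋯ ∂_n^{m_n} f`. -/
noncomputable def iterPderiv {n : ℕ} (m : Fin n →₀ ℕ) (f : MvPolynomial (Fin n) ℝ) :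
    MvPolynomial (Fin n) ℝ :=
  (Finset.univ : Finset (Fin n)).toList.foldr
    (fun i g => (fun p => pderiv i p)^[m i] g) f

/-- The Hessian matrix of `f` at the point `w`. -/
noncomputable def hess {n : ℕ} (f : MvPolynomial (Fin n) ℝ) (w : Fin n → ℝ) :
    Matrix (Fin n) (Fin n) ℝ :=
  fun i j => eval w (pderiv i (pderiv j f))

/-- A set `J ⊆ ℕ^n` is M-convex. -/
def MConvex {n : ℕ} (J : Set (Fin n →₀ ℕ)) : Prop :=
  ∀ m ∈ J, ∀ m' ∈ J, ∀ i : Fin n, m' i < m i →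
    ∃ j : Fin n, m j < m' j ∧ m - Finsupp.single i 1 + Finsupp.single j 1 ∈ J

/-- A homogeneous polynomial `f` of degree `d` with nonnegative coefficients is
Lorentzian if its support is M-convex and for every `m ∈ ℕ^n` with
`m_1 + ⋯ + m_n = d - 2` the (constant) Hessian of `∂^m f` has at most one
positive eigenvalue. -/
def IsLorentzian {n : ℕ} (d : ℕ) (f : MvPolynomial (Fin n) ℝ) : Prop :=
  f.IsHomogeneous d ∧ (∀ m, 0 ≤ f.coeff m) ∧
    MConvex (↑f.support : Set (Fin n →₀ ℕ)) ∧
    ∀ m : Fin n →₀ ℕ, (∑ i, m i) = d - 2 →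
      AtMostOnePosEigenvalue (hess (iterPderiv m f) 0)


theorem aux_spec_s11 {n : ℕ} {A : Matrix (Fin n) (Fin n) ℝ} (hA : A.IsHermitian) (v : Fin n → ℝ)
    (h : ∀ i, 0 < hA.eigenvalues i → (hA.eigenvectorBasis i : Fin n → ℝ) ⬝ᵥ v = 0) :
    v ⬝ᵥ A.mulVec v ≤ 0 := by
  have hT : Aᵀ = A := by simpa [Matrix.IsHermitian, Matrix.conjTranspose_eq_transpose_of_trivial] using hA
  have h1 := hA.eigenvectorBasis.sum_inner_mul_inner (WithLp.toLp 2 v) (WithLp.toLp 2 (A.mulVec v))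
  simp only [EuclideanSpace.inner_eq_star_dotProduct, star_trivial] at h1
  rw [dotProduct_comm, ← h1]
  apply Finset.sum_nonpos
  intro i _
  have h2 : (A.mulVec v) ⬝ᵥ (hA.eigenvectorBasis i : Fin n → ℝ)
      = hA.eigenvalues i * ((hA.eigenvectorBasis i : Fin n → ℝ) ⬝ᵥ v) := by
    rw [dotProduct_comm, Matrix.dotProduct_mulVec, ← Matrix.mulVec_transpose, hT,
      hA.mulVec_eigenvectorBasis, smul_dotProduct, smul_eq_mul]
  rw [h2]
  rcases lt_or_ge 0 (hA.eigenvalues i) with h3 | h3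
  · rw [h i h3]; simp
  · nlinarith [mul_self_nonneg ((hA.eigenvectorBasis i : Fin n → ℝ) ⬝ᵥ v)]

theorem aux_hyp {n : ℕ} {M : Matrix (Fin n) (Fin n) ℝ} (hM : Mᵀ = M) (u : Fin n → ℝ)
    (h : ∀ v : Fin n → ℝ, u ⬝ᵥ v = 0 → v ⬝ᵥ M.mulVec v ≤ 0) : SatisfiesHyp M := by
  intro v w hw
  have hs : w ⬝ᵥ M.mulVec v = v ⬝ᵥ M.mulVec w := by
    rw [Matrix.dotProduct_mulVec, ← Matrix.mulVec_transpose, hM, dotProduct_comm]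
  have ha : u ⬝ᵥ w ≠ 0 := fun h0 => absurd (h w h0) (not_le.mpr hw)
  have hz := h ((u ⬝ᵥ w) • v - (u ⬝ᵥ v) • w) (by
    simp only [dotProduct_sub, dotProduct_smul, smul_eq_mul]; ring)
  simp only [Matrix.mulVec_sub, Matrix.mulVec_smul, dotProduct_sub, sub_dotProduct,
    dotProduct_smul, smul_dotProduct, smul_eq_mul, hs] at hz
  set a := u ⬝ᵥ w
  set b := u ⬝ᵥ v
  set B := v ⬝ᵥ M.mulVec w
  set p := v ⬝ᵥ M.mulVec v
  set q := w ⬝ᵥ M.mulVec w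
  have ha2 : 0 < a ^ 2 := by positivity
  have h1 : a ^ 2 * (p * q - B ^ 2) ≤ 0 := by
    nlinarith [sq_nonneg (a * B - b * q), mul_nonpos_of_nonneg_of_nonpos hw.le hz]
  nlinarith [nonpos_of_mul_nonpos_right h1 ha2]

theorem aux_base {n : ℕ} {M : Matrix (Fin n) (Fin n) ℝ} (h : AtMostOnePosEigenvalue M) :
    SatisfiesHyp M := by
  obtain ⟨hM, hc⟩ := h
  have hT : Mᵀ = M := by simpa [Matrix.IsHermitian, Matrix.conjTranspose_eq_transpose_of_trivial] using hM
  by_cases hex : ∃ i, 0 < hM.eigenvalues i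
  · obtain ⟨i, hi⟩ := hex
    refine aux_hyp hT (hM.eigenvectorBasis i : Fin n → ℝ) fun v hv => aux_spec_s11 hM v fun j hj => ?_
    have : j = i := Finset.card_le_one.mp hc j (by simpa using hj) i (by simpa using hi)
    rw [this]; exact hv
  · push Not at hex
    exact aux_hyp hT 0 fun v _ => aux_spec_s11 hM v fun j hj => absurd hj (not_lt.mpr (hex j))

theorem aux_key {n : ℕ} {M : Matrix (Fin n) (Fin n) ℝ} (hM : Mᵀ = M) (hnn : ∀ i j, 0 ≤ M i j)
    (w : Fin n → ℝ) (hw : ∀ i, 0 < w i)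
    (hconn : ∀ y : Fin n → ℝ, (∀ i j, 0 < M i j → y i = y j) →
      ∀ i j, M.mulVec w i ≠ 0 → M.mulVec w j ≠ 0 → y i = y j)
    (hineq : ∀ v : Fin n → ℝ, v ⬝ᵥ M.mulVec v ≤ ∑ i, (M.mulVec v i) ^ 2 / (M.mulVec w i / w i)) :
    SatisfiesHyp M := by
  have hsym : ∀ i j, M i j = M j i := fun i j => by
    conv_lhs => rw [← hM]
    rfl
  have hMw : ∀ i, 0 ≤ M.mulVec w i := fun i => by
    simp only [Matrix.mulVec, dotProduct]
    exact Finset.sum_nonneg fun j _ => mul_nonneg (hnn i j) (hw j).le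
  have hrow : ∀ i, M.mulVec w i = 0 → ∀ j, M i j = 0 := by
    intro i hi j
    simp only [Matrix.mulVec, dotProduct] at hi
    have := (Finset.sum_eq_zero_iff_of_nonneg
      (fun j _ => mul_nonneg (hnn i j) (hw j).le)).mp hi j (Finset.mem_univ j)
    exact (mul_eq_zero.mp this).resolve_right (hw j).ne'
  set g : Fin n → ℝ := fun i => Real.sqrt (M.mulVec w i / w i) with hg
  have hg2 : ∀ i, g i ^ 2 = M.mulVec w i / w i := fun i =>
    Real.sq_sqrt (div_nonneg (hMw i) (hw i).le)
  have hg2w : ∀ i, g i ^ 2 * w i = M.mulVec w i := fun i => by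
    rw [hg2]; exact div_mul_cancel₀ _ (hw i).ne'
  have hg0 : ∀ i, g i = 0 → ∀ j, M i j = 0 := fun i hi => hrow i (by rw [← hg2w, hi]; simp)
  set A : Matrix (Fin n) (Fin n) ℝ := fun i j => (g i)⁻¹ * M i j * (g j)⁻¹ with hAdef
  have hA : A.IsHermitian := by
    ext i j
    rw [Matrix.conjTranspose_apply, star_trivial]
    change (g j)⁻¹ * M j i * (g i)⁻¹ = (g i)⁻¹ * M i j * (g j)⁻¹
    rw [hsym j i]; ring
  have hMA : ∀ i j, M i j = g i * A i j * g j := by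
    intro i j
    simp only [hAdef]
    by_cases hi : g i = 0
    · simp [hi, hg0 i hi]
    by_cases hj : g j = 0
    · rw [hsym i j]; simp [hj, hg0 j hj]
    field_simp
  have hqA : ∀ v : Fin n → ℝ, v ⬝ᵥ M.mulVec v = (fun i => g i * v i) ⬝ᵥ A.mulVec (fun i => g i * v i) := by
    intro v
    simp only [dotProduct, Matrix.mulVec, Finset.mul_sum]
    refine Finset.sum_congr rfl fun i _ => Finset.sum_congr rfl fun j _ => ?_
    rw [hMA i j]; ring
  refine aux_hyp hM (M.mulVec w) fun v hv => ?_
  rw [hqA]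
  refine aux_spec_s11 hA _ fun k hk => ?_
  set l := hA.eigenvalues k
  set e : Fin n → ℝ := (hA.eigenvectorBasis k : Fin n → ℝ) with he
  have hAe : A.mulVec e = l • e := hA.mulVec_eigenvectorBasis k
  have hee : e ⬝ᵥ e = 1 := by
    have h1 := hA.eigenvectorBasis.orthonormal.1 k
    have h2 : inner ℝ (hA.eigenvectorBasis k) (hA.eigenvectorBasis k) = (1:ℝ) := by
      rw [real_inner_self_eq_norm_sq, h1]; norm_num
    simpa only [EuclideanSpace.inner_eq_star_dotProduct, star_trivial] using h2
  set x : Fin n → ℝ := fun i => (g i)⁻¹ * e i with hx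
  have hAx : ∀ i, (g i)⁻¹ * M.mulVec x i = l * e i := by
    intro i
    have := congrFun hAe i
    simp only [Pi.smul_apply, smul_eq_mul] at this
    rw [← this]
    simp only [Matrix.mulVec, dotProduct, Finset.mul_sum, hAdef, hx]
    exact Finset.sum_congr rfl fun j _ => by ring
  have hegx : ∀ i, e i = g i * x i := by
    intro i
    by_cases hi : g i = 0
    · have := hAx i
      rw [hi] at this ⊢
      simp only [_root_.inv_zero, zero_mul] at this ⊢
      exact (mul_eq_zero.mp this.symm).resolve_left hk.ne'
    · simp only [hx]; field_simp
  have hMx : ∀ i, M.mulVec x i = l * g i ^ 2 * x i := by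
    intro i
    by_cases hi : g i = 0
    · simp [Matrix.mulVec, dotProduct, hg0 i hi, hi]
    · have := hAx i
      rw [hegx i] at this
      field_simp at this
      linarith
  have hS : ∑ i, g i ^ 2 * x i ^ 2 = 1 := by
    rw [← hee]
    simp only [dotProduct]
    exact Finset.sum_congr rfl fun i _ => by rw [hegx i]; ring
  have hq : x ⬝ᵥ M.mulVec x = l := by
    simp only [dotProduct, hMx]
    have h0 : l = l * ∑ i, g i ^ 2 * x i ^ 2 := by rw [hS, mul_one]
    conv_rhs => rw [h0, Finset.mul_sum]
    exact Finset.sum_congr rfl fun i _ => by ring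
  have hl1 : 1 ≤ l := by
    have h1 := hineq x
    have h2 : ∑ i, (M.mulVec x i) ^ 2 / (M.mulVec w i / w i) = l ^ 2 := by
      rw [← mul_one (l ^ 2), ← hS, Finset.mul_sum]
      refine Finset.sum_congr rfl fun i _ => ?_
      rw [← hg2, hMx]
      by_cases hi : g i = 0
      · simp [hi]
      · field_simp
    rw [hq, h2] at h1
    nlinarith
  have hdir : ∑ i, ∑ j, M i j * w i * w j * (x i / w i - x j / w j) ^ 2 = 2 * (1 - l) := by
    have h1 : ∀ i j, M i j * w i * w j * (x i / w i - x j / w j) ^ 2 =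
        (M i j * w j) * (x i ^ 2 / w i) + (M j i * w i) * (x j ^ 2 / w j) - 2 * (x i * (M i j * x j)) := by
      intro i j
      rw [hsym j i]
      have := (hw i).ne'
      have := (hw j).ne'
      field_simp
      ring
    simp only [h1, Finset.sum_sub_distrib, Finset.sum_add_distrib]
    rw [Finset.sum_comm (f := fun i j => (M j i * w i) * (x j ^ 2 / w j))]
    have h2 : ∑ i, ∑ j, (M i j * w j) * (x i ^ 2 / w i) = 1 := by
      rw [← hS]
      refine Finset.sum_congr rfl fun i _ => ?_
      rw [← Finset.sum_mul, hg2]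
      simp only [Matrix.mulVec, dotProduct]
      ring
    have h3 : ∑ i, ∑ j, 2 * (x i * (M i j * x j)) = 2 * l := by
      rw [← hq]
      simp only [Matrix.mulVec, dotProduct, Finset.mul_sum]
    rw [h2, h3]; ring
  have hnn2 : ∀ i j, 0 ≤ M i j * w i * w j * (x i / w i - x j / w j) ^ 2 := fun i j => by
    have := hnn i j
    have := hw i
    have := hw j
    positivity
  have hz : ∀ i j, 0 < M i j → x i / w i = x j / w j := by
    intro i j hij
    have h0 : ∑ i, ∑ j, M i j * w i * w j * (x i / w i - x j / w j) ^ 2 = 0 :=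
      le_antisymm (by rw [hdir]; linarith)
        (Finset.sum_nonneg fun i _ => Finset.sum_nonneg fun j _ => hnn2 i j)
    have h1 := (Finset.sum_eq_zero_iff_of_nonneg
      (fun i _ => Finset.sum_nonneg fun j _ => hnn2 i j)).mp h0 i (Finset.mem_univ i)
    have h2 := (Finset.sum_eq_zero_iff_of_nonneg (fun j _ => hnn2 i j)).mp h1 j (Finset.mem_univ j)
    have h3 : M i j * w i * w j ≠ 0 := (mul_pos (mul_pos hij (hw i)) (hw j)).ne'
    have h4 := (mul_eq_zero.mp h2).resolve_left h3
    exact sub_eq_zero.mp (pow_eq_zero_iff (two_ne_zero) |>.mp h4)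
  have hcon := hconn (fun i => x i / w i) hz
  by_cases hex : ∃ i, M.mulVec w i ≠ 0
  · obtain ⟨i0, hi0⟩ := hex
    have hgv : e ⬝ᵥ (fun i => g i * v i) = (x i0 / w i0) * (M.mulVec w ⬝ᵥ v) := by
      simp only [dotProduct, Finset.mul_sum]
      refine Finset.sum_congr rfl fun i _ => ?_
      rw [hegx i]
      by_cases hi : M.mulVec w i = 0
      · have : g i = 0 := by simp [hg, hi]
        rw [hi, this]; simp
      · have h5 := hcon i i0 hi hi0
        rw [← h5, ← hg2w]
        have := (hw i).ne'
        field_simp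
    rw [hgv, hv, mul_zero]
  · push Not at hex
    have : ∀ i, g i = 0 := fun i => by simp [hg, hex i]
    simp [dotProduct, this]

theorem aux_comm {n : ℕ} (i j : Fin n) (f : MvPolynomial (Fin n) ℝ) :
    pderiv i (pderiv j f) = pderiv j (pderiv i f) := by
  rcases eq_or_ne i j with rfl | hij
  · rfl
  ext m
  simp only [coeff_pderiv, Finsupp.add_apply, Finsupp.single_eq_of_ne hij,
    Finsupp.single_eq_of_ne hij.symm, add_right_comm m]
  push_cast
  ring

theorem aux_nonneg {n : ℕ} {p : MvPolynomial (Fin n) ℝ} (hp : ∀ m, 0 ≤ p.coeff m)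
    {w : Fin n → ℝ} (hw : ∀ i, 0 < w i) : 0 ≤ eval w p := by
  rw [MvPolynomial.eval_eq]
  exact Finset.sum_nonneg fun m _ => mul_nonneg (hp m)
    (Finset.prod_nonneg fun i _ => pow_nonneg (hw i).le _)

theorem aux_pos {n : ℕ} {p : MvPolynomial (Fin n) ℝ} (hp : ∀ m, 0 ≤ p.coeff m)
    {w : Fin n → ℝ} (hw : ∀ i, 0 < w i) (m : Fin n →₀ ℕ) (hm : p.coeff m ≠ 0) :
    0 < eval w p := by
  rw [MvPolynomial.eval_eq]
  refine Finset.sum_pos' (fun m _ => mul_nonneg (hp m)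
    (Finset.prod_nonneg fun i _ => pow_nonneg (hw i).le _)) ⟨m, by simpa using hm, ?_⟩
  exact mul_pos ((hp m).lt_of_ne hm.symm) (Finset.prod_pos fun i _ => pow_pos (hw i) _)

theorem aux_pderiv_nonneg {n : ℕ} {p : MvPolynomial (Fin n) ℝ} (hp : ∀ m, 0 ≤ p.coeff m)
    (i : Fin n) (m : Fin n →₀ ℕ) : 0 ≤ (pderiv i p).coeff m := by
  rw [coeff_pderiv]
  exact mul_nonneg (hp _) (by positivity)

theorem aux_pderiv_ne {n : ℕ} {p : MvPolynomial (Fin n) ℝ} (i : Fin n) (m : Fin n →₀ ℕ) :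
    (pderiv i p).coeff m ≠ 0 ↔ p.coeff (m + Finsupp.single i 1) ≠ 0 := by
  rw [coeff_pderiv]
  have : ((m i : ℝ) + 1) ≠ 0 := by positivity
  simp [this]

theorem aux_mconvex {n : ℕ} {p : MvPolynomial (Fin n) ℝ}
    (h : MConvex (↑p.support : Set (Fin n →₀ ℕ))) (i : Fin n) :
    MConvex (↑(pderiv i p).support : Set (Fin n →₀ ℕ)) := by
  intro m hm m' hm' k hk
  simp only [Finset.mem_coe, mem_support_iff, aux_pderiv_ne] at hm hm' ⊢
  obtain ⟨j, hj, hj2⟩ := h (m + Finsupp.single i 1) (by simpa using hm)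
    (m' + Finsupp.single i 1) (by simpa using hm') k (by simpa using hk)
  refine ⟨j, by simpa using hj, ?_⟩
  simp only [Finset.mem_coe, mem_support_iff] at hj2
  convert hj2 using 2
  ext l
  simp only [Finsupp.add_apply, Finsupp.tsub_apply, Finsupp.single_apply]
  have : k = l → 0 < m l := by rintro rfl; omega
  split_ifs with h1 h2 h3 <;> simp_all <;> omega

theorem aux_it_comm {n : ℕ} (i j : Fin n) (k : ℕ) (f : MvPolynomial (Fin n) ℝ) :
    pderiv i ((fun p => pderiv j p)^[k] f) = (fun p => pderiv j p)^[k] (pderiv i f) := by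
  have h : Function.Commute (fun p : MvPolynomial (Fin n) ℝ => pderiv i p)
      (fun p => pderiv j p) := fun p => aux_comm i j p
  exact (h.iterate_right k).eq f

theorem aux_fold_comm {n : ℕ} (i : Fin n) (m : Fin n →₀ ℕ) (L : List (Fin n))
    (f : MvPolynomial (Fin n) ℝ) :
    L.foldr (fun i g => (fun p => pderiv i p)^[m i] g) (pderiv i f) =
      pderiv i (L.foldr (fun i g => (fun p => pderiv i p)^[m i] g) f) := by
  induction L with
  | nil => rfl
  | cons a L ih => simp only [List.foldr_cons]; rw [ih, aux_it_comm]

theorem aux_fold {n : ℕ} (i : Fin n) (m : Fin n →₀ ℕ) (L : List (Fin n)) (hL : L.Nodup)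
    (f : MvPolynomial (Fin n) ℝ) :
    L.foldr (fun j g => (fun p => pderiv j p)^[(m + Finsupp.single i 1 : Fin n →₀ ℕ) j] g) f =
      if i ∈ L then pderiv i (L.foldr (fun j g => (fun p => pderiv j p)^[m j] g) f)
      else L.foldr (fun j g => (fun p => pderiv j p)^[m j] g) f := by
  induction L with
  | nil => rfl
  | cons a L ih =>
    simp only [List.foldr_cons]
    rw [ih hL.of_cons]
    have ha : a ∉ L := (List.nodup_cons.mp hL).1
    by_cases hia : i = a
    · subst hia
      simp only [ha, if_false, List.mem_cons, true_or, if_true, Finsupp.add_apply,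
        Finsupp.single_eq_same, Function.iterate_succ_apply']
    · have h1 : (m + Finsupp.single i 1 : Fin n →₀ ℕ) a = m a := by
        simp [Finsupp.single_apply, hia]
      rw [h1]
      by_cases hi : i ∈ L
      · simp only [hi, if_true, List.mem_cons, or_true]
        rw [aux_it_comm]
      · simp [hi, hia]

theorem aux_iter {n : ℕ} (i : Fin n) (m : Fin n →₀ ℕ) (f : MvPolynomial (Fin n) ℝ) :
    iterPderiv m (pderiv i f) = iterPderiv (m + Finsupp.single i 1) f := by
  unfold iterPderiv
  rw [aux_fold_comm, aux_fold _ _ _ (Finset.nodup_toList _), if_pos (by simp)]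

theorem aux_iter_zero {n : ℕ} (f : MvPolynomial (Fin n) ℝ) : iterPderiv 0 f = f := by
  unfold iterPderiv
  induction (Finset.univ : Finset (Fin n)).toList with
  | nil => rfl
  | cons a L ih => simp only [List.foldr_cons]; rw [ih]; rfl

theorem aux_lor {n k : ℕ} {f : MvPolynomial (Fin n) ℝ} (hf : IsLorentzian (k + 3) f) (i : Fin n) :
    IsLorentzian (k + 2) (pderiv i f) := by
  obtain ⟨h1, h2, h3, h4⟩ := hf
  refine ⟨h1.pderiv, aux_pderiv_nonneg h2 i, aux_mconvex h3 i, fun m hm => ?_⟩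
  rw [aux_iter]
  apply h4
  simp only [Finsupp.add_apply, Finset.sum_add_distrib, hm]
  simp [Finsupp.single_apply]

theorem aux_euler {n d : ℕ} {f : MvPolynomial (Fin n) ℝ} (hf : f.IsHomogeneous d)
    (w : Fin n → ℝ) : ∑ i, w i * eval w (pderiv i f) = d * eval w f := by
  have := congrArg (eval w) hf.sum_X_mul_pderiv
  simpa using this

theorem aux_conn {n k : ℕ} {f : MvPolynomial (Fin n) ℝ} (hh : f.IsHomogeneous (k + 2))
    (hnn : ∀ m, 0 ≤ f.coeff m) (hc : MConvex (↑f.support : Set (Fin n →₀ ℕ)))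
    {w : Fin n → ℝ} (hw : ∀ i, 0 < w i) (y : Fin n → ℝ)
    (hy : ∀ i j, 0 < hess f w i j → y i = y j) (i j : Fin n)
    (hi : (hess f w).mulVec w i ≠ 0) (hj : (hess f w).mulVec w j ≠ 0) : y i = y j := by
  have hpos : ∀ m : Fin n →₀ ℕ, ∀ a b : Fin n,
      f.coeff (m + Finsupp.single a 1 + Finsupp.single b 1) ≠ 0 → y a = y b := by
    intro m a b h
    have h1 : 0 < hess f w b a := by
      refine aux_pos (aux_pderiv_nonneg (aux_pderiv_nonneg hnn _) _) hw m ?_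
      rw [aux_pderiv_ne, aux_pderiv_ne, add_right_comm]; exact h
    exact (hy b a h1).symm
  have hsub : ∀ (M : Fin n →₀ ℕ) (a : Fin n), 0 < M a → ∃ m, M = m + Finsupp.single a 1 := by
    intro M a h
    refine ⟨M - Finsupp.single a 1, (tsub_add_cancel_of_le ?_).symm⟩
    rw [Finsupp.single_le_iff]; omega
  have hpair : ∀ (M : Fin n →₀ ℕ), f.coeff M ≠ 0 → ∀ a b, 0 < M a → 0 < M b → y a = y b := by
    intro M hM a b ha hb
    rcases eq_or_ne a b with rfl | hab
    · rfl
    obtain ⟨m, rfl⟩ := hsub M b hb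
    have ha' : 0 < m a := by
      simpa [Finsupp.single_apply, hab.symm] using ha
    obtain ⟨m, rfl⟩ := hsub m a ha'
    exact hpos m a b hM
  have hact : ∀ a, (hess f w).mulVec w a ≠ 0 → ∃ M, f.coeff M ≠ 0 ∧ 0 < M a := by
    intro a ha
    have : pderiv a f ≠ 0 := by
      intro h0
      apply ha
      simp only [Matrix.mulVec, dotProduct, hess]
      apply Finset.sum_eq_zero
      intro b _
      rw [aux_comm, h0]; simp
    obtain ⟨m, hm⟩ := MvPolynomial.ne_zero_iff.mp this
    exact ⟨_, (aux_pderiv_ne a m).mp hm, by simp⟩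
  obtain ⟨m, hm, hmi⟩ := hact i hi
  obtain ⟨m', hm', hmj⟩ := hact j hj
  by_cases h0 : 0 < m' i
  · exact hpair m' hm' i j h0 hmj
  obtain ⟨l, hl, hl2⟩ := hc m (by simpa using hm) m' (by simpa using hm') i (by omega)
  obtain ⟨p, rfl⟩ := hsub m i hmi
  simp only [add_tsub_cancel_right, Finset.mem_coe, mem_support_iff] at hl2
  have hdeg : ∑ a, (p + Finsupp.single i 1 : Fin n →₀ ℕ) a = k + 2 := by
    have := hh hm
    simpa [Finsupp.weight_apply, Finsupp.sum_fintype] using this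
  have hdeg2 : ∑ a, p a = k + 1 := by
    simp only [Finsupp.add_apply, Finset.sum_add_distrib] at hdeg
    simp [Finsupp.single_apply] at hdeg
    omega
  obtain ⟨a, -, ha⟩ : ∃ a ∈ Finset.univ, p a ≠ 0 := by
    apply Finset.exists_ne_zero_of_sum_ne_zero
    rw [hdeg2]; omega
  have e1 : y i = y a := hpair _ hm i a (by simp) (by simp; omega)
  have e2 : y a = y l := hpair _ hl2 a l (by simp; omega) (by simp)
  have e3 : y l = y j := hpair _ hm' l j (by omega) hmj
  rw [e1, e2, e3]

theorem aux_main {n k : ℕ} (f : MvPolynomial (Fin n) ℝ)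
    (hf : IsLorentzian (k + 2) f) (w : Fin n → ℝ) (hw : ∀ i, 0 < w i) :
    SatisfiesHyp (hess f w) := by
  induction k generalizing f with
  | zero =>
    have h := hf.2.2.2 0 (by simp)
    rw [aux_iter_zero] at h
    have : hess f w = hess f 0 := by
      funext i j
      have h2 : (pderiv i (pderiv j f)).IsHomogeneous 0 := hf.1.pderiv.pderiv
      rw [← totalDegree_zero_iff_isHomogeneous, totalDegree_eq_zero_iff_eq_C] at h2
      simp only [hess]
      rw [h2, eval_C, eval_C]
    rw [this]
    exact aux_base h
  | succ k ih =>
    have hIH : ∀ i, SatisfiesHyp (hess (pderiv i f) w) := fun i => ih _ (aux_lor hf i)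
    obtain ⟨h1, h2, h3, -⟩ := hf
    have hsym : ∀ i j, hess f w i j = hess f w j i := fun i j => by simp only [hess]; rw [aux_comm]
    have hTnn : ∀ i j l, 0 ≤ hess (pderiv i f) w j l := fun i j l =>
      aux_nonneg (aux_pderiv_nonneg (aux_pderiv_nonneg (aux_pderiv_nonneg h2 _) _) _) hw
    have hE : ∀ i l, ∑ j, w j * hess (pderiv i f) w j l = (k + 1 : ℝ) * hess f w i l := by
      intro i l
      have h5 : (pderiv l (pderiv i f)).IsHomogeneous (k + 1) := h1.pderiv.pderiv
      have := aux_euler h5 w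
      rw [hsym]
      push_cast at this
      exact this
    have hE3 : ∀ j l, ∑ i, w i * hess (pderiv i f) w j l = (k + 1 : ℝ) * hess f w j l := by
      intro j l
      rw [← hE j l]
      refine Finset.sum_congr rfl fun i _ => ?_
      simp only [hess]
      rw [aux_comm l i, aux_comm j i, aux_comm l j]
    have hTs : ∀ i, (hess (pderiv i f) w)ᵀ = hess (pderiv i f) w := by
      intro i
      ext a b
      simp only [Matrix.transpose_apply, hess]
      rw [aux_comm]
    have hv1 : ∀ i (v : Fin n → ℝ), v ⬝ᵥ (hess (pderiv i f) w).mulVec w =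
        (k + 1 : ℝ) * (hess f w).mulVec v i := by
      intro i v
      rw [Matrix.dotProduct_mulVec, ← Matrix.mulVec_transpose, hTs, dotProduct_comm]
      simp only [Matrix.mulVec, dotProduct, Finset.mul_sum]
      rw [Finset.sum_comm]
      refine Finset.sum_congr rfl fun l _ => ?_
      rw [← mul_assoc, ← hE, Finset.sum_mul]
      exact Finset.sum_congr rfl fun j _ => by ring
    have hv2 : ∀ v : Fin n → ℝ, ∑ i, w i * (v ⬝ᵥ (hess (pderiv i f) w).mulVec v) =
        (k + 1 : ℝ) * (v ⬝ᵥ (hess f w).mulVec v) := by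
      intro v
      simp only [Matrix.mulVec, dotProduct, Finset.mul_sum]
      rw [Finset.sum_comm]
      refine Finset.sum_congr rfl fun j _ => ?_
      rw [Finset.sum_comm]
      refine Finset.sum_congr rfl fun l _ => ?_
      have := hE3 j l
      calc _ = (∑ i, w i * hess (pderiv i f) w j l) * (v j * v l) := by
            rw [Finset.sum_mul]; exact Finset.sum_congr rfl fun i _ => by ring
        _ = _ := by rw [this]; ring
    have hnn : ∀ i j, 0 ≤ hess f w i j := fun i j =>
      aux_nonneg (aux_pderiv_nonneg (aux_pderiv_nonneg h2 _) _) hw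
    have hk : (0 : ℝ) < k + 1 := by positivity
    refine aux_key (by ext a b; exact hsym b a) hnn w hw
      (fun y hy i j hi hj => aux_conn (k := k + 1) h1 h2 h3 hw y hy i j hi hj) fun v => ?_
    have hterm : ∀ i, w i * (v ⬝ᵥ (hess (pderiv i f) w).mulVec v) ≤
        (k + 1 : ℝ) * (((hess f w).mulVec v i) ^ 2 / ((hess f w).mulVec w i / w i)) := by
      intro i
      have hww := hv1 i w
      by_cases h0 : (hess f w).mulVec w i = 0
      · have hz : ∀ j l, hess (pderiv i f) w j l = 0 := by
          intro j l
          rw [h0, mul_zero] at hww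
          simp only [Matrix.mulVec, dotProduct, Finset.mul_sum] at hww
          have hn : ∀ j l, 0 ≤ w j * (hess (pderiv i f) w j l * w l) := fun j l =>
            mul_nonneg (hw j).le (mul_nonneg (hTnn i j l) (hw l).le)
          have h6 := (Finset.sum_eq_zero_iff_of_nonneg
            (fun j _ => Finset.sum_nonneg fun l _ => hn j l)).mp hww j (Finset.mem_univ j)
          have h7 := (Finset.sum_eq_zero_iff_of_nonneg (fun l _ => hn j l)).mp h6 l (Finset.mem_univ l)
          have h8 := (mul_eq_zero.mp h7).resolve_left (hw j).ne'
          exact (mul_eq_zero.mp h8).resolve_right (hw l).ne'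
        have h9 : hess (pderiv i f) w = 0 := by ext j l; exact hz j l
        rw [h9, h0]; simp
      · have hp : 0 < (hess f w).mulVec w i := by
          refine lt_of_le_of_ne ?_ (Ne.symm h0)
          simp only [Matrix.mulVec, dotProduct]
          exact Finset.sum_nonneg fun j _ => mul_nonneg (hnn i j) (hw j).le
        have h10 := hIH i v w (by rw [hww]; positivity)
        rw [hww, hv1 i v] at h10
        have hwi := hw i
        rw [div_div_eq_mul_div, mul_div_assoc', le_div_iff₀ hp]
        set a := v ⬝ᵥ (hess (pderiv i f) w).mulVec v
        set b := (hess f w).mulVec v i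
        set c := (hess f w).mulVec w i
        have h11 : a * c ≤ (k + 1 : ℝ) * b ^ 2 := by
          refine le_of_mul_le_mul_left ?_ hk
          nlinarith
        nlinarith [mul_le_mul_of_nonneg_left h11 hwi.le]
    have := Finset.sum_le_sum fun i (_ : i ∈ Finset.univ) => hterm i
    rw [hv2, ← Finset.mul_sum] at this
    exact le_of_mul_le_mul_left this hk

theorem stmt_11 {n d : ℕ} (hd : 2 ≤ d) (f : MvPolynomial (Fin n) ℝ)
    (hf : IsLorentzian d f) (w : Fin n → ℝ) (hw : ∀ i, 0 < w i) :
    SatisfiesHyp (hess f w) := by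
  obtain ⟨k, rfl⟩ := Nat.exists_eq_add_of_le' hd
  exact aux_main f hf w hw
end

section
/- Let f ∈ ℝ[w_1, …, w_n] be a homogeneous polynomial of degree d ≥ 2 with nonnegative coefficients whose support is M-convex, and let w ∈ ℝ^n have all coordinates strictly positive. Then the Hessian matrix H_f(w) is irreducible when restricted to its support: for every nonempty proper subset S ⊊ supp(H_f(w)) there exist i ∈ S and j ∈ supp(H_f(w)) \ S with (∂_i ∂_j f)(w) ≠ 0. -/
open Matrix MvPolynomial
open scoped Classical

/-- The support of a matrix: the set of indices whose row is nonzero. -/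
noncomputable def matrixSupp {n : ℕ} (M : Matrix (Fin n) (Fin n) ℝ) : Finset (Fin n) :=
  Finset.univ.filter fun i => M i ≠ 0

lemma hess_coeff {n : ℕ} (f : MvPolynomial (Fin n) ℝ) (i j : Fin n) (m : Fin n →₀ ℕ) :
    ∃ c : ℝ, 0 < c ∧ coeff m (pderiv i (pderiv j f)) =
      coeff (m + Finsupp.single i 1 + Finsupp.single j 1) f * c := by
  refine ⟨((((m + Finsupp.single i 1 : Fin n →₀ ℕ) j : ℕ) : ℝ) + 1) * ((m i : ℝ) + 1),
    by positivity, ?_⟩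
  rw [coeff_pderiv, coeff_pderiv, mul_assoc]

lemma hess_ne {n : ℕ} (f : MvPolynomial (Fin n) ℝ) (hcoeff : ∀ m, 0 ≤ f.coeff m)
    (w : Fin n → ℝ) (hw : ∀ i, 0 < w i) (i j : Fin n) :
    hess f w i j ≠ 0 ↔ ∃ m ∈ f.support, Finsupp.single i 1 + Finsupp.single j 1 ≤ m := by
  constructor
  · intro h
    have h1 : pderiv i (pderiv j f) ≠ 0 := by
      intro h0
      exact h (by simp [hess, h0])
    obtain ⟨m, hm⟩ := MvPolynomial.ne_zero_iff.1 h1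
    obtain ⟨c, hc, he⟩ := hess_coeff f i j m
    rw [he] at hm
    refine ⟨_, mem_support_iff.2 (left_ne_zero_of_mul hm), ?_⟩
    rw [add_assoc]
    exact le_add_self
  · rintro ⟨m, hm, hle⟩
    obtain ⟨m, rfl⟩ := exists_add_of_le hle
    apply ne_of_gt
    unfold hess
    rw [eval_eq]
    have hm' : m ∈ (pderiv i (pderiv j f)).support := by
      obtain ⟨c, hc, he⟩ := hess_coeff f i j m
      rw [mem_support_iff, he]
      rw [mem_support_iff, add_comm, ← add_assoc] at hm
      exact mul_ne_zero hm hc.ne'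
    apply Finset.sum_pos _ ⟨m, hm'⟩
    intro k hk
    apply mul_pos
    · obtain ⟨c, hc, he⟩ := hess_coeff f i j k
      rw [mem_support_iff] at hk
      refine lt_of_le_of_ne ?_ hk.symm
      rw [he]
      exact mul_nonneg (hcoeff _) hc.le
    · exact Finset.prod_pos fun x _ => pow_pos (hw x) _

lemma pair_le {n : ℕ} {i j : Fin n} (hij : i ≠ j) {m : Fin n →₀ ℕ} (hi : 0 < m i) (hj : 0 < m j) :
    Finsupp.single i 1 + Finsupp.single j 1 ≤ m := by
  intro x
  simp only [Finsupp.add_apply, Finsupp.single_apply]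
  split_ifs <;> grind

theorem stmt_13 {n d : ℕ} (hd : 2 ≤ d) (f : MvPolynomial (Fin n) ℝ)
    (hf : f.IsHomogeneous d) (hcoeff : ∀ m, 0 ≤ f.coeff m)
    (hM : MConvex (↑f.support : Set (Fin n →₀ ℕ)))
    (w : Fin n → ℝ) (hw : ∀ i, 0 < w i) :
    ∀ S : Finset (Fin n), S.Nonempty → S ⊂ matrixSupp (hess f w) →
      ∃ i ∈ S, ∃ j ∈ matrixSupp (hess f w) \ S, hess f w i j ≠ 0 := by
  intro S hne hS
  have key := hess_ne f hcoeff w hw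
  have mem : ∀ i j, hess f w i j ≠ 0 → j ∈ matrixSupp (hess f w) := by
    intro i j h
    have h2 : hess f w j i ≠ 0 := by
      rw [key] at h ⊢
      rwa [add_comm]
    simp only [matrixSupp, Finset.mem_filter, Finset.mem_univ, true_and]
    intro h0
    exact h2 (by rw [h0]; rfl)
  have ex : ∀ i ∈ matrixSupp (hess f w), ∃ m ∈ f.support, 0 < m i := by
    intro i hi
    simp only [matrixSupp, Finset.mem_filter, Finset.mem_univ, true_and] at hi
    obtain ⟨j, hj⟩ := Function.ne_iff.1 hi
    obtain ⟨m, hm, hle⟩ := (key i j).1 hj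
    refine ⟨m, hm, ?_⟩
    have := hle i
    simp only [Finsupp.add_apply, Finsupp.single_eq_same] at this
    omega
  by_contra! hcon
  have hcon' : ∀ i ∈ S, ∀ j, j ∉ S → hess f w i j = 0 := by
    intro i hi j hj
    by_contra h
    exact h (hcon i hi j (Finset.mem_sdiff.2 ⟨mem i j h, hj⟩))
  obtain ⟨i, hi⟩ := hne
  obtain ⟨hsub, j, hj, hjS⟩ := (Finset.ssubset_iff_of_subset hS.1).1 hS |> fun h => And.intro hS.1 h
  obtain ⟨m, hm, hmi⟩ := ex i (hsub hi)
  obtain ⟨m', hm', hmj⟩ := ex j hj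
  have hij : i ≠ j := by
    rintro rfl
    exact hjS hi
  have hm'i : m' i = 0 := by
    by_contra h
    exact (key i j).2 ⟨m', hm', pair_le hij (Nat.pos_of_ne_zero h) hmj⟩ (hcon' i hi j hjS)
  obtain ⟨k, hk, hmem⟩ := hM m hm m' hm' i (by omega)
  have hkS : k ∉ S := by
    intro hkS
    have hkj : k ≠ j := by
      rintro rfl
      exact hjS hkS
    exact (key k j).2 ⟨m', hm', pair_le hkj (by omega) hmj⟩ (hcon' k hkS j hjS)
  have hle : Finsupp.single i 1 ≤ m := by
    rw [Finsupp.single_le_iff]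
    exact hmi
  obtain ⟨r, rfl⟩ := exists_add_of_le hle
  have hdeg : (Finsupp.single i 1 + r).degree = d := by
    have := hf (mem_support_iff.1 hm)
    rwa [Finsupp.degree_eq_weight_one]
  have hr : r ≠ 0 := by
    rintro rfl
    simp at hdeg
    omega
  obtain ⟨l, hl⟩ := Finsupp.ne_iff.1 hr
  have hl : Finsupp.single l 1 ≤ r := by
    rw [Finsupp.single_le_iff]
    exact Nat.one_le_iff_ne_zero.2 hl
  have hlS : l ∈ S := by
    by_contra h
    exact (key i l).2 ⟨_, hm, add_le_add le_rfl hl⟩ (hcon' i hi l h)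
  rw [add_tsub_cancel_left] at hmem
  exact (key l k).2 ⟨_, hmem, add_le_add hl le_rfl⟩ (hcon' l hlS k hkS)
end
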